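/- arXiv:2402.11529 — 4 statements merged into one kernel-verified Lean document; each statement's English description precedes it below -/
import Mathlib

section
/- Let n ≥ 0 be an integer and let q be a complex number such that q^j ≠ 1 for all 1 ≤ j ≤ 2n+1. Suppose (α_k)_{k=0}^{n} and (β_k)_{k=0}^{n} satisfy the Bailey pair relation relative to (q,q): β_j = Σ_{k=0}^{j} α_k/((q;q)_{j−k}(q²;q)_{j+k}) for all 0 ≤ j ≤ n. Then (q²;q)_n · Σ_{k=0}^{n} (q^{−n};q)_k (−1)^k q^{k(k+1)/2 + (n+1)k} β_k = Σ_{k=0}^{n} [(q^{−n};q)_k/(q^{n+2};q)_k] (−1)^k q^{k(k+1)/2 + (n+1)k} α_k. -/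
open Finset

/-- The q-Pochhammer symbol `(x;q)_n = ∏_{j=0}^{n-1} (1 - x q^j)`. -/
noncomputable def qPoch (x q : ℂ) (n : ℕ) : ℂ := ∏ j ∈ Finset.range n, (1 - x * q ^ j)

noncomputable def gb (q : ℂ) : ℕ → ℕ → ℂ
  | _, 0 => 1
  | 0, _ + 1 => 0
  | m + 1, i + 1 => gb q m (i + 1) + q ^ (m - i) * gb q m i

lemma gb_zero_right (q : ℂ) (m : ℕ) : gb q m 0 = 1 := by cases m <;> simp [gb]

lemma gb_big (q : ℂ) : ∀ m i : ℕ, m < i → gb q m i = 0 := by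
  intro m
  induction m with
  | zero => intro i hi; cases i with
    | zero => omega
    | succ i => simp [gb]
  | succ m ih => intro i hi; cases i with
    | zero => omega
    | succ i => simp [gb, ih (i + 1) (by omega), ih i (by omega)]

lemma qPoch_succ (x q : ℂ) (n : ℕ) : qPoch x q (n + 1) = qPoch x q n * (1 - x * q ^ n) := by
  simp [qPoch, Finset.prod_range_succ]

lemma qPoch_zero (x q : ℂ) : qPoch x q 0 = 1 := by simp [qPoch]

lemma qPoch_add (x q : ℂ) (m n : ℕ) :
    qPoch x q (m + n) = qPoch x q m * qPoch (x * q ^ m) q n := by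
  simp only [qPoch, Finset.prod_range_add, pow_add, mul_assoc]

lemma gb_mul (q : ℂ) : ∀ m i : ℕ, i ≤ m →
    gb q m i * (qPoch q q i * qPoch q q (m - i)) = qPoch q q m := by
  intro m
  induction m with
  | zero => intro i hi; obtain rfl : i = 0 := by omega
            simp [gb, qPoch]
  | succ m ih =>
    intro i hi
    cases i with
    | zero => simp [gb_zero_right, qPoch_zero]
    | succ i =>
      have h1 := ih i (by omega)
      rcases Nat.lt_or_ge i m with h | h
      · have h2 := ih (i + 1) h
        obtain ⟨d, rfl⟩ : ∃ d, m = i + 1 + d := ⟨m - (i + 1), by omega⟩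
        have e1 : i + 1 + d - i = d + 1 := by omega
        have e2 : i + 1 + d - (i + 1) = d := by omega
        have e3 : i + 1 + d + 1 - (i + 1) = d + 1 := by omega
        simp only [gb, e1, e2, e3] at *
        rw [qPoch_succ q q (i + 1 + d)]
        rw [qPoch_succ q q d] at *
        rw [qPoch_succ q q i] at *
        linear_combination (1 - q * q ^ d) * h2 + q ^ (d + 1) * (1 - q * q ^ i) * h1
      · obtain rfl : i = m := by omega
        simp only [gb, gb_big q i (i + 1) (by omega), Nat.sub_self, qPoch_zero] at *
        rw [qPoch_succ q q i]
        linear_combination (1 - q * q ^ i) * h1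

lemma qPoch_ne (x q : ℂ) (n : ℕ) (h : ∀ i < n, 1 - x * q ^ i ≠ 0) : qPoch x q n ≠ 0 :=
  Finset.prod_ne_zero_iff.mpr (fun i hi => h i (Finset.mem_range.mp hi))

lemma vand (q : ℂ) : ∀ (m : ℕ) (a : ℂ), (∀ i < m, 1 - (a * q) * q ^ i ≠ 0) →
    ∑ i ∈ Finset.range (m + 1), gb q m i * (a ^ i * q ^ (i ^ 2)) / qPoch (a * q) q i
      = 1 / qPoch (a * q) q m := by
  intro m
  induction m with
  | zero => intro a _; simp [gb, qPoch]
  | succ m ih =>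
    intro a ha
    have ha1 : ∀ i < m, 1 - (a * q) * q ^ i ≠ 0 := fun i hi => ha i (by omega)
    have ha2 : ∀ i < m, 1 - (a * q * q) * q ^ i ≠ 0 := fun i hi => by
      have := ha (i + 1) (by omega)
      rwa [pow_succ', ← mul_assoc] at this
    have hS := ih a ha1
    have hT := ih (a * q) ha2
    have h0 : 1 - a * q ≠ 0 := by simpa using ha 0 (by omega)
    have hp : ∀ i, qPoch (a * q) q (i + 1) = (1 - a * q) * qPoch (a * q * q) q i := by
      intro i
      rw [add_comm, qPoch_add]; simp [qPoch]
    rw [Finset.sum_range_succ']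
    have key : ∀ i ∈ Finset.range (m + 1),
        gb q (m + 1) (i + 1) * (a ^ (i + 1) * q ^ ((i + 1) ^ 2)) / qPoch (a * q) q (i + 1)
        = gb q m (i + 1) * (a ^ (i + 1) * q ^ ((i + 1) ^ 2)) / qPoch (a * q) q (i + 1)
          + a * q ^ (m + 1) / (1 - a * q) *
            (gb q m i * ((a * q) ^ i * q ^ (i ^ 2)) / qPoch (a * q * q) q i) := by
      intro i hi
      obtain ⟨d, rfl⟩ : ∃ d, m = i + d := ⟨m - i, by have := Finset.mem_range.mp hi; omega⟩
      have hne : qPoch (a * q * q) q i ≠ 0 := qPoch_ne _ _ _ (fun j hj => ha2 j (by omega))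
      simp only [gb, Nat.add_sub_cancel_left]
      rw [hp]
      field_simp
      ring
    rw [Finset.sum_congr rfl key, Finset.sum_add_distrib, ← Finset.mul_sum, hT]
    have h3 : ∑ i ∈ Finset.range (m + 1),
        gb q m (i + 1) * (a ^ (i + 1) * q ^ ((i + 1) ^ 2)) / qPoch (a * q) q (i + 1) + 1
        = 1 / qPoch (a * q) q m := by
      rw [← hS, Finset.sum_range_succ, gb_big q m (m + 1) (by omega), Finset.sum_range_succ' _ m]
      simp [gb_zero_right, qPoch_zero]
    have h4 : gb q (m + 1) 0 * (a ^ 0 * q ^ (0 ^ 2)) / qPoch (a * q) q 0 = 1 := by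
      simp [gb_zero_right, qPoch_zero]
    rw [h4, add_right_comm, h3]
    have hx := hp m
    have hy := qPoch_succ (a * q) q m
    have n1 := qPoch_ne _ _ _ ha1
    have n2 := qPoch_ne _ _ _ ha2
    have n3 := qPoch_ne _ _ _ ha
    have e : a * q ^ (m + 1) / (1 - a * q) * (1 / qPoch (a * q * q) q m)
        = a * q ^ (m + 1) / qPoch (a * q) q (m + 1) := by
      rw [hx]; field_simp
    rw [e, div_add_div _ _ n1 n3, div_eq_div_iff (mul_ne_zero n1 n3) n3, hy]
    ring

lemma Aconv (n : ℕ) (q : ℂ) : ∀ j ≤ n,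
    qPoch (q ^ (-(n : ℤ))) q j * (-1) ^ j * q ^ (j * (j + 1) / 2 + (n + 1) * j) *
      qPoch q q (n - j) = qPoch q q n * q ^ (j ^ 2 + j) := by
  intro j
  induction j with
  | zero => intro _; simp [qPoch_zero]
  | succ j ih =>
    intro hj
    obtain ⟨d, rfl⟩ : ∃ d, n = j + 1 + d := ⟨n - (j + 1), by omega⟩
    have h := ih (by omega)
    have e1 : j + 1 + d - j = d + 1 := by omega
    have e2 : j + 1 + d - (j + 1) = d := by omega
    have e3 : (j + 1) * (j + 1 + 1) / 2 = j * (j + 1) / 2 + (j + 1) := by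
      rw [show (j + 1) * (j + 1 + 1) = j * (j + 1) + (j + 1) * 2 by ring,
        Nat.add_mul_div_right _ _ (by norm_num)]
    rw [e1, qPoch_succ q q d] at h
    rw [e2, e3]
    rcases eq_or_ne q 0 with rfl | hq
    · simp
    · have hz : q ^ (-((j + 1 + d : ℕ) : ℤ)) * q ^ j * q ^ (d + 1) = 1 := by
        rw [mul_assoc, ← pow_add, ← zpow_natCast, ← zpow_add₀ hq]
        simp; ring_nf; simp
      rw [qPoch_succ (q ^ _) q j]
      generalize q ^ (-((j + 1 + d : ℕ) : ℤ)) = z at *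
      generalize j * (j + 1) / 2 = t at *
      linear_combination (q ^ (2 * j + 2)) * h + (qPoch z q j * (-1) ^ j * q ^ (t + (j + 1 + d + 1) * j) * q ^ (2 * j + 2) * qPoch q q d) * hz

lemma perk (k m : ℕ) (q : ℂ)
    (hq : ∀ j : ℕ, 1 ≤ j → j ≤ 2 * (k + m) + 1 → q ^ j ≠ 1) :
    qPoch (q ^ 2) q (k + m) * ∑ i ∈ Finset.range (m + 1),
      (qPoch (q ^ (-((k + m : ℕ) : ℤ))) q (k + i) * (-1) ^ (k + i) *
        q ^ ((k + i) * (k + i + 1) / 2 + (k + m + 1) * (k + i))) /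
        (qPoch q q i * qPoch (q ^ 2) q (k + i + k)) =
      qPoch (q ^ (-((k + m : ℕ) : ℤ))) q k / qPoch (q ^ (k + m + 2)) q k * (-1) ^ k *
          q ^ (k * (k + 1) / 2 + (k + m + 1) * k) := by
  have hne : ∀ e r, 1 ≤ e → e + r ≤ 2 * (k + m) + 2 → qPoch (q ^ e) q r ≠ 0 := by
    intro e r he hr
    refine qPoch_ne _ _ _ (fun i hi => ?_)
    rw [← pow_add]
    exact sub_ne_zero.mpr (hq (e + i) (by omega) (by omega)).symm
  have hne1 : ∀ r, r ≤ m + k → qPoch q q r ≠ 0 := fun r hr => by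
    simpa using hne 1 r le_rfl (by omega)
  have hA : ∀ j ≤ k + m, qPoch (q ^ (-((k + m : ℕ) : ℤ))) q j * (-1) ^ j *
      q ^ (j * (j + 1) / 2 + (k + m + 1) * j) =
      qPoch q q (k + m) * q ^ (j ^ 2 + j) / qPoch q q (k + m - j) := by
    intro j hj
    rw [eq_div_iff (hne1 _ (by omega))]
    exact Aconv (k + m) q j hj
  have hV := vand q m (q ^ (2 * k + 1)) (by
    intro i hi
    rw [← pow_succ, ← pow_add]
    exact sub_ne_zero.mpr (hq (2 * k + 1 + 1 + i) (by omega) (by omega)).symm)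
  rw [← pow_succ] at hV
  have hR : qPoch (q ^ (-((k + m : ℕ) : ℤ))) q k / qPoch (q ^ (k + m + 2)) q k * (-1) ^ k *
          q ^ (k * (k + 1) / 2 + (k + m + 1) * k) =
      qPoch q q (k + m) * q ^ (k ^ 2 + k) / qPoch q q m / qPoch (q ^ (k + m + 2)) q k := by
    have := hA k (by omega)
    rw [Nat.add_sub_cancel_left] at this
    rw [← this]; ring
  have hs : ∀ i, qPoch (q ^ 2) q (2 * k + i) = qPoch (q ^ 2) q (2 * k) * qPoch (q ^ (2 * k + 1 + 1)) q i := by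
    intro i
    rw [qPoch_add, ← pow_add]; congr 2; ring
  have hs2 : qPoch (q ^ 2) q (2 * k + m) = qPoch (q ^ 2) q (k + m) * qPoch (q ^ (k + m + 2)) q k := by
    rw [show 2 * k + m = (k + m) + k by ring, qPoch_add, ← pow_add]; congr 2; ring
  have key : ∀ i ∈ Finset.range (m + 1), (qPoch (q ^ (-((k + m : ℕ) : ℤ))) q (k + i) * (-1) ^ (k + i) *
        q ^ ((k + i) * (k + i + 1) / 2 + (k + m + 1) * (k + i))) /
        (qPoch q q i * qPoch (q ^ 2) q (k + i + k)) =
      qPoch q q (k + m) * q ^ (k ^ 2 + k) / (qPoch (q ^ 2) q (2 * k) * qPoch q q m) *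
       (gb q m i * ((q ^ (2 * k + 1)) ^ i * q ^ (i ^ 2)) / qPoch (q ^ (2 * k + 1 + 1)) q i) := by
    intro i hi
    have him : i ≤ m := by have := Finset.mem_range.mp hi; omega
    rw [hA (k + i) (by omega), show k + i + k = 2 * k + i by ring, hs,
      show k + m - (k + i) = m - i by omega]
    have hg := gb_mul q m i him
    have n1 := hne1 i (by omega)
    have n2 := hne1 (m - i) (by omega)
    have n3 := hne1 m (by omega)
    have n4 := hne 2 (2 * k) (by omega) (by omega)
    have n5 := hne (2 * k + 1 + 1) i (by omega) (by omega)
    have hg' : gb q m i = qPoch q q m / (qPoch q q i * qPoch q q (m - i)) := by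
      rw [eq_div_iff (mul_ne_zero n1 n2)]; exact hg
    rw [hg', show q ^ ((k + i) ^ 2 + (k + i)) = q ^ (k ^ 2 + k) * ((q ^ (2 * k + 1)) ^ i * q ^ (i ^ 2)) by ring]
    field_simp
  rw [Finset.sum_congr rfl key, ← Finset.mul_sum, hV, hR]
  have h5 := (hs m).symm.trans hs2
  have n3 := hne1 m (by omega)
  have n4 := hne 2 (2 * k) (by omega) (by omega)
  have n5 := hne (2 * k + 1 + 1) m (by omega) (by omega)
  have n6 := hne (k + m + 2) k (by omega) (by omega)
  field_simp
  linear_combination (-(qPoch q q (k + m) * q ^ (k ^ 2 + k))) * h5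

theorem stmt2 (n : ℕ) (q : ℂ) (hq : ∀ j : ℕ, 1 ≤ j → j ≤ 2 * n + 1 → q ^ j ≠ 1) (α β : ℕ → ℂ)
    (hpair : ∀ j ≤ n, β j = ∑ k ∈ Finset.range (j + 1),
      α k / (qPoch q q (j - k) * qPoch (q ^ 2) q (j + k))) :
    qPoch (q ^ 2) q n * ∑ k ∈ Finset.range (n + 1),
        qPoch (q ^ (-(n : ℤ))) q k * (-1) ^ k * q ^ (k * (k + 1) / 2 + (n + 1) * k) * β k =
      ∑ k ∈ Finset.range (n + 1),
        qPoch (q ^ (-(n : ℤ))) q k / qPoch (q ^ (n + 2)) q k * (-1) ^ k *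
          q ^ (k * (k + 1) / 2 + (n + 1) * k) * α k := by
  have h1 : ∀ j ∈ Finset.range (n + 1),
      qPoch (q ^ (-(n : ℤ))) q j * (-1) ^ j * q ^ (j * (j + 1) / 2 + (n + 1) * j) * β j =
      ∑ k ∈ Finset.range (j + 1), qPoch (q ^ (-(n : ℤ))) q j * (-1) ^ j *
        q ^ (j * (j + 1) / 2 + (n + 1) * j) *
        (α k / (qPoch q q (j - k) * qPoch (q ^ 2) q (j + k))) := by
    intro j hj
    rw [hpair j (by have := Finset.mem_range.mp hj; omega), Finset.mul_sum]
  rw [Finset.sum_congr rfl h1, Finset.sum_comm' (t' := Finset.range (n + 1))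
    (s' := fun k => Finset.Ico k (n + 1))
    (by intro x y; simp only [Finset.mem_range, Finset.mem_Ico]; omega), Finset.mul_sum]
  refine Finset.sum_congr rfl (fun k hk => ?_)
  obtain ⟨m, rfl⟩ : ∃ m, n = k + m := ⟨n - k, by have := Finset.mem_range.mp hk; omega⟩
  rw [← perk k m q hq, Finset.sum_Ico_eq_sum_range, show k + m + 1 - k = m + 1 by omega,
    mul_assoc, Finset.sum_mul]
  congr 1
  refine Finset.sum_congr rfl (fun i _ => ?_)
  rw [Nat.add_sub_cancel_left]
  ring
end

section
/- Let m ≥ 2 and 0 ≤ a ≤ m−2 be integers, and let q be a primitive Nth root of unity for some integer N ≥ 1. Then Σ_{k=0}^{N−1} (1 − q^{(a+1)(2k+1)})·q^{mk² + (m−a−1)k} = 0. -/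
open Finset

theorem stmt4 (m a N : ℕ) (hm : 2 ≤ m) (ha : a ≤ m - 2) (hN : 1 ≤ N) (q : ℂ)
    (hqN : q ^ N = 1) (hprim : ∀ j : ℕ, 1 ≤ j → j < N → q ^ j ≠ 1) :
    ∑ k ∈ Finset.range N,
      (1 - q ^ ((a + 1) * (2 * k + 1))) * q ^ (m * k ^ 2 + (m - a - 1) * k) = 0 := by
  obtain ⟨c, rfl⟩ : ∃ c, m = a + 1 + c := ⟨m - a - 1, by omega⟩
  have hc : a + 1 + c - a - 1 = c := by omega
  rw [hc]
  simp only [sub_mul, one_mul, Finset.sum_sub_distrib]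
  rw [sub_eq_zero, ← Finset.sum_range_reflect]
  refine Finset.sum_congr rfl fun k hk => ?_
  rw [Finset.mem_range] at hk
  obtain ⟨j, rfl⟩ : ∃ j, N = j + k + 1 := ⟨N - 1 - k, by omega⟩
  have hj : j + k + 1 - 1 - k = j := by omega
  rw [hj, ← pow_add]
  have key : (a + 1 + c) * j ^ 2 + c * j + (j + k + 1) * ((a + 1 + c) * (k + 1))
      = (a + 1) * (2 * k + 1) + ((a + 1 + c) * k ^ 2 + c * k)
        + (j + k + 1) * ((a + 1 + c) * j + c) := by ring
  have h := congrArg (fun n => q ^ n) key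
  simpa only [pow_add q _ ((j + k + 1) * _), pow_mul q (j + k + 1), hqN, one_pow, mul_one] using h
end

section
/- Let m ≥ 2 be an integer. For every real q with 0 < q < 1, ((2m−1)/2)·q^{(2m−3)²/(8(2m−1))}·P_m(q) = ((2m−1)/2)·Σ_{k=0}^{∞} χ_{4m−2}(k)·q^{k²/(8(2m−1))}, where the powers of q are real powers. -/
open Finset

/-- The Gaussian binomial coefficient `[n choose k]_q`. -/
noncomputable def qBinom (q : ℂ) (n k : ℕ) : ℂ :=
  if k ≤ n then qPoch q q n / (qPoch q q (n - k) * qPoch q q k) else 0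

/-- Extend a tuple `g : Fin k → ℕ` to `ℕ → ℕ` by zero. -/
def pad (k : ℕ) (g : Fin k → ℕ) : ℕ → ℕ := fun j => if h : j < k then g ⟨j, h⟩ else 0

/-- The general term of the multi-sum `P_m(q)`: here `n j` denotes `n_{j+1}` (0-based indexing),
so `n (m-2)` is `n_{m-1}` and `n 0` is `n_1`. -/
noncomputable def Pterm (m : ℕ) (q : ℂ) (n : ℕ → ℕ) : ℂ :=
  (-1) ^ (n (m - 2)) *
    q ^ (n (m - 2) * (n (m - 2) + 1) / 2 + ∑ j ∈ Finset.range (m - 2), ((n j) ^ 2 + n j)) /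
    qPoch (-q) q (n 0) *
    ∏ i ∈ Finset.range (m - 2), qBinom q (n (i + 1)) (n i)

/-- The multi-sum `P_m(q)`. -/
noncomputable def P (m : ℕ) (q : ℂ) : ℂ := ∑' n : Fin (m - 1) → ℕ, Pterm m q (pad (m - 1) n)

/-- The truncated multi-sum `Z_{m,N}(q)`. -/
noncomputable def Z (m N : ℕ) (q : ℂ) : ℂ :=
  ∑ n ∈ Fintype.piFinset (fun _ : Fin (m - 1) => Finset.range N), Pterm m q (pad (m - 1) n)

/-- The odd periodic function `χ_{4m-2}`. -/
def chiP (m : ℕ) (k : ℤ) : ℤ :=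
  if k % (4 * m - 2) = (2 * (m : ℤ) - 3) % (4 * m - 2) then 1
  else if k % (4 * m - 2) = (2 * (m : ℤ) + 1) % (4 * m - 2) then -1
  else 0


/-- congruence for `HasSum` over the reals. -/
lemma hs_congr {β : Type*} {f g : β → ℝ} {a b : ℝ} (h : HasSum f a) (e : ∀ x, g x = f x)
    (e' : b = a) : HasSum g b := by
  obtain rfl : g = f := funext e
  rw [e']; exact h

/-! Real versions of the objects. -/

/-- `(q;q)_n` over the reals. -/
noncomputable def qq (q : ℝ) (n : ℕ) : ℝ := ∏ j ∈ Finset.range n, (1 - q ^ (j + 1))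

/-- `(-q;q)_n` over the reals. -/
noncomputable def nq (q : ℝ) (n : ℕ) : ℝ := ∏ j ∈ Finset.range n, (1 + q ^ (j + 1))

/-- real Gaussian binomial. -/
noncomputable def bR (q : ℝ) (n k : ℕ) : ℝ :=
  if k ≤ n then qq q n / (qq q (n - k) * qq q k) else 0

/-- Bailey kernel. -/
noncomputable def UU (q : ℝ) (n r : ℕ) : ℝ :=
  if r ≤ n then 1 / (qq q (n - r) * qq q (n + r + 1)) else 0

/-- Bailey alpha. -/
noncomputable def al (q : ℝ) (r : ℕ) : ℝ := (-1) ^ r * q ^ (r ^ 2) * (1 - q ^ (2 * r + 1))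

/-- Bailey beta after `k` iterations. -/
noncomputable def BB (q : ℝ) (k N : ℕ) : ℝ :=
  ∑ r ∈ Finset.range (N + 1), al q r * q ^ (k * (r ^ 2 + r)) * UU q N r

/-- triangular numbers. -/
def tri (n : ℕ) : ℕ := n * (n + 1) / 2

lemma tri_zero : tri 0 = 0 := rfl

lemma tri_succ (n : ℕ) : tri (n + 1) = tri n + (n + 1) := by
  unfold tri
  have : (n + 1) * (n + 1 + 1) = n * (n + 1) + (n + 1) * 2 := by ring
  rw [this, Nat.add_mul_div_right _ _ (by norm_num)]

lemma le_tri (n : ℕ) : n ≤ tri n := by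
  induction n with
  | zero => simp [tri]
  | succ n ih => rw [tri_succ]; omega

lemma tri_add (r j : ℕ) : tri (r + j) = tri r + tri j + r * j := by
  induction j with
  | zero => simp [tri]
  | succ j ih => rw [← add_assoc, tri_succ, tri_succ, ih]; ring

lemma qq_zero (q : ℝ) : qq q 0 = 1 := by simp [qq]
lemma qq_succ (q : ℝ) (n : ℕ) : qq q (n + 1) = qq q n * (1 - q ^ (n + 1)) := by
  simp [qq, Finset.prod_range_succ]
lemma nq_succ (q : ℝ) (n : ℕ) : nq q (n + 1) = nq q n * (1 + q ^ (n + 1)) := by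
  simp [nq, Finset.prod_range_succ]


lemma fac_pos {q : ℝ} (h0 : 0 < q) (h1 : q < 1) (n : ℕ) : 0 < 1 - q ^ (n + 1) := by
  have : q ^ (n + 1) < 1 := pow_lt_one₀ h0.le h1 (Nat.succ_ne_zero n)
  linarith

lemma qq_pos {q : ℝ} (h0 : 0 < q) (h1 : q < 1) (n : ℕ) : 0 < qq q n := Finset.prod_pos fun j _ => fac_pos h0 h1 j

lemma qq_le_one {q : ℝ} (h0 : 0 < q) (h1 : q < 1) (n : ℕ) : qq q n ≤ 1 :=
  Finset.prod_le_one (fun j _ => (fac_pos h0 h1 j).le) fun j _ => by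
    have := pow_pos h0 (j + 1); linarith

lemma nq_pos {q : ℝ} (h0 : 0 < q) (_h1 : q < 1) (n : ℕ) : 0 < nq q n := Finset.prod_pos fun j _ => by positivity

lemma qq_lower {q : ℝ} (h0 : 0 < q) (h1 : q < 1) : ∃ c : ℝ, 0 < c ∧ ∀ n, c ≤ qq q n := by
  refine ⟨Real.exp (-(q / (1 - q) * (1 - q)⁻¹)), Real.exp_pos _, fun n => ?_⟩
  have hq : 0 < 1 - q := by linarith
  have key : ∀ j : ℕ, Real.exp (-(q / (1 - q) * q ^ j)) ≤ 1 - q ^ (j + 1) := by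
    intro j
    have hp := fac_pos h0 h1 j
    have hle : q ^ (j + 1) ≤ q := by
      calc q ^ (j + 1) ≤ q ^ 1 := pow_le_pow_of_le_one h0.le h1.le (by omega)
        _ = q := pow_one q
    rw [Real.exp_neg, inv_le_comm₀ (Real.exp_pos _) hp]
    have e1 : (1 - q ^ (j + 1))⁻¹ = q ^ (j + 1) / (1 - q ^ (j + 1)) + 1 := by
      field_simp; ring
    have e2 : q ^ (j + 1) / (1 - q ^ (j + 1)) ≤ q ^ (j + 1) / (1 - q) := by
      apply div_le_div_of_nonneg_left (by positivity) hq (by linarith)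
    have e3 : q ^ (j + 1) / (1 - q) = q / (1 - q) * q ^ j := by
      rw [pow_succ]; ring
    have := Real.add_one_le_exp (q / (1 - q) * q ^ j)
    rw [e1]; linarith
  have : ∏ j ∈ Finset.range n, Real.exp (-(q / (1 - q) * q ^ j)) ≤ qq q n :=
    Finset.prod_le_prod (fun j _ => (Real.exp_pos _).le) fun j _ => key j
  refine le_trans ?_ this
  rw [← Real.exp_sum, Real.exp_le_exp, Finset.sum_neg_distrib, neg_le_neg_iff, ← Finset.mul_sum]
  refine mul_le_mul_of_nonneg_left ?_ (by positivity)
  rw [← tsum_geometric_of_lt_one h0.le h1]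
  exact (summable_geometric_of_lt_one h0.le h1).sum_le_tsum _ (fun i _ => by positivity)

/-- The initial Bailey pair. -/
lemma bailey_init {q : ℝ} (h0 : 0 < q) (h1 : q < 1) (n : ℕ) : BB q 0 n = 1 / (qq q n * nq q n) := by
  induction n with
  | zero =>
    have := fac_pos h0 h1 0
    simp only [zero_add, pow_one] at this
    simp [BB, al, UU, qq, nq, this.ne']
  | succ n ih =>
    have hne : ∀ n, qq q n ≠ 0 := fun n => (qq_pos h0 h1 n).ne'
    have hnn := (nq_pos h0 h1 n).ne'
    have hf := (fac_pos h0 h1 n).ne'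
    have hg : (1 + q ^ (n + 1)) ≠ 0 := by positivity
    set G : ℕ → ℝ := fun r => (-1) ^ r * q ^ (r ^ 2) * q ^ (n + 1 - r) * (1 - q ^ (2 * r)) /
      (qq q (n + 1 - r) * qq q (n + 1 + r)) with hG
    have step : ∀ r ∈ Finset.range (n + 1), (1 - q ^ (2 * n + 2)) * (al q r * UU q (n + 1) r)
        - al q r * UU q n r = G r - G (r + 1) := by
      intro r hr
      obtain ⟨d, rfl⟩ := Nat.exists_eq_add_of_le (Nat.lt_succ_iff.mp (Finset.mem_range.mp hr))
      have a1 : r + d + 1 - r = d + 1 := by omega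
      have a2 : r + d - r = d := by omega
      have a3 : r + d + 1 - (r + 1) = d := by omega
      simp only [hG, al, UU, a1, a2, a3]
      rw [if_pos (by omega), if_pos (by omega)]
      have b1 : r + d + 1 + r + 1 = (r + d + r + 1) + 1 := by ring
      have b2 : r + d + 1 + r = (r + d + r + 1) := by ring
      have b3 : r + d + 1 + (r + 1) = (r + d + r + 1) + 1 := by ring
      rw [b1, b2, b3, qq_succ q d, qq_succ q (r + d + r + 1)]
      have c1 := hne d
      have c2 := hne (r + d + r + 1)
      have c3 := (fac_pos h0 h1 d).ne'
      have c4 := (fac_pos h0 h1 (r + d + r + 1)).ne'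
      field_simp
      ring
    have last : (1 - q ^ (2 * n + 2)) * (al q (n + 1) * UU q (n + 1) (n + 1)) = G (n + 1) := by
      simp only [hG, al, UU, le_refl, if_true, Nat.sub_self, qq_zero]
      rw [qq_succ q (n + 1 + (n + 1))]
      have c2 := hne (n + 1 + (n + 1))
      have c4 := (fac_pos h0 h1 (n + 1 + (n + 1))).ne'
      field_simp
      ring
    have tot := Finset.sum_congr rfl step
    rw [Finset.sum_range_sub', Finset.sum_sub_distrib, ← Finset.mul_sum] at tot
    have hB : BB q 0 n = ∑ r ∈ Finset.range (n + 1), al q r * UU q n r := by simp [BB]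
    have hB' : BB q 0 (n + 1) = ∑ r ∈ Finset.range (n + 1), al q r * UU q (n + 1) r
        + al q (n + 1) * UU q (n + 1) (n + 1) := by
      simp only [BB, zero_mul, pow_zero, mul_one]
      rw [Finset.sum_range_succ]
    have hG0 : G 0 = 0 := by simp [hG]
    have fin : (1 - q ^ (2 * n + 2)) * BB q 0 (n + 1) = BB q 0 n := by
      rw [hB', mul_add, last, hB]; linarith
    have hh : (1 - q ^ (2 * n + 2)) = (1 - q ^ (n + 1)) * (1 + q ^ (n + 1)) := by ring
    rw [ih, hh] at fin
    have hz : (1 - q ^ (n + 1)) * (1 + q ^ (n + 1)) ≠ 0 := mul_ne_zero hf hg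
    apply mul_left_cancel₀ hz
    rw [fin, qq_succ, nq_succ]
    have := hne n
    field_simp

lemma bR_zero {q : ℝ} (h0 : 0 < q) (h1 : q < 1) (N : ℕ) : bR q N 0 = 1 := by
  have := (qq_pos h0 h1 N).ne'
  simp [bR, qq_zero, this]

lemma bR_pascal {q : ℝ} (h0 : 0 < q) (h1 : q < 1) (N j : ℕ) : bR q (N + 1) (j + 1) = q ^ (j + 1) * bR q N (j + 1) + bR q N j := by
  have hne : ∀ n, qq q n ≠ 0 := fun n => (qq_pos h0 h1 n).ne'
  rcases lt_trichotomy j N with h | h | h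
  · obtain ⟨d, rfl⟩ := Nat.exists_eq_add_of_lt h
    simp only [bR]
    rw [if_pos (by omega), if_pos (by omega), if_pos (by omega)]
    have a1 : j + d + 1 + 1 - (j + 1) = d + 1 := by omega
    have a2 : j + d + 1 - (j + 1) = d := by omega
    have a3 : j + d + 1 - j = d + 1 := by omega
    rw [a1, a2, a3, qq_succ q d, qq_succ q j, qq_succ q (j + d + 1)]
    have c1 := hne d
    have c2 := hne j
    have c3 := (fac_pos h0 h1 d).ne'
    have c4 := (fac_pos h0 h1 j).ne'
    field_simp
    ring
  · subst h
    have := hne j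
    have := hne (j + 1)
    simp [bR, qq_zero, *]
  · simp only [bR]
    rw [if_neg (by omega), if_neg (by omega), if_neg (by omega)]; ring

lemma vander {q : ℝ} (h0 : 0 < q) (h1 : q < 1) (N : ℕ) : ∀ M, ∑ j ∈ Finset.range (N + 1), q ^ (j * (j + M)) * bR q N j / qq q (j + M)
    = 1 / qq q (N + M) := by
  have hne : ∀ n, qq q n ≠ 0 := fun n => (qq_pos h0 h1 n).ne'
  induction N with
  | zero => intro M; simp [bR_zero h0 h1]
  | succ N ih =>
    intro M
    have hlast : bR q N (N + 1) = 0 := by simp [bR]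
    have e : ∑ j ∈ Finset.range (N + 1 + 1), q ^ (j * (j + M)) * bR q (N + 1) j / qq q (j + M)
      = ∑ j ∈ Finset.range (N + 1 + 1), q ^ (j * (j + M)) * (q ^ j * bR q N j) / qq q (j + M)
       + ∑ j ∈ Finset.range (N + 1), q ^ ((j + 1) * (j + 1 + M)) * bR q N j / qq q (j + 1 + M) := by
      rw [Finset.sum_range_succ', Finset.sum_range_succ' (n := N + 1), add_right_comm,
        ← Finset.sum_add_distrib]
      congr 1
      · refine Finset.sum_congr rfl fun j _ => ?_
        rw [bR_pascal h0 h1]; ring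
      · simp [bR_zero h0 h1]
    rw [e, Finset.sum_range_succ, hlast]
    have := ih (M + 1)
    rw [show N + 1 + M = N + (M + 1) by ring, ← this, mul_zero, mul_zero, zero_div, add_zero,
      ← Finset.sum_add_distrib]
    refine Finset.sum_congr rfl fun j _ => ?_
    rw [show j + 1 + M = (j + M) + 1 by ring, show j + (M + 1) = (j + M) + 1 by ring, qq_succ]
    have c1 := hne (j + M)
    have c2 := (fac_pos h0 h1 (j + M)).ne'
    field_simp
    ring

lemma bailey_step {q : ℝ} (h0 : 0 < q) (h1 : q < 1) (N r : ℕ) (hr : r ≤ N) :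
    ∑ M ∈ Finset.range (N + 1), q ^ (M ^ 2 + M) / qq q (N - M) * UU q M r
      = q ^ (r ^ 2 + r) * UU q N r := by
  have hne : ∀ n, qq q n ≠ 0 := fun n => (qq_pos h0 h1 n).ne'
  obtain ⟨d, rfl⟩ := Nat.exists_eq_add_of_le hr
  rw [show r + d + 1 = r + (d + 1) by ring, Finset.sum_range_add, Finset.sum_eq_zero, zero_add]
  · have v := vander h0 h1 d (2 * r + 1)
    simp only [UU]
    rw [if_pos hr, show r + d - r = d by omega, show r + d + r + 1 = d + (2 * r + 1) by ring,
      one_div, mul_inv, ← one_div (qq q (d + (2 * r + 1))), ← v, Finset.mul_sum, Finset.mul_sum]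
    refine Finset.sum_congr rfl fun j hj => ?_
    have hj' : j ≤ d := Nat.lt_succ_iff.mp (Finset.mem_range.mp hj)
    rw [if_pos (by omega), bR, if_pos hj', show r + d - (r + j) = d - j by omega,
      show r + j - r = j by omega, show r + j + r + 1 = j + (2 * r + 1) by ring]
    have c1 := hne (d - j)
    have c2 := hne j
    have c3 := hne d
    have c4 := hne (j + (2 * r + 1))
    field_simp
    ring
  · intro M hM
    have := Finset.mem_range.mp hM
    rw [UU, if_neg (by omega), mul_zero]

lemma BB_succ {q : ℝ} (h0 : 0 < q) (h1 : q < 1) (k N : ℕ) : ∑ M ∈ Finset.range (N + 1),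
    q ^ (M ^ 2 + M) * bR q N M * (qq q M * BB q k M) = qq q N * BB q (k + 1) N := by
  have hne : ∀ n, qq q n ≠ 0 := fun n => (qq_pos h0 h1 n).ne'
  have hext : ∀ M ∈ Finset.range (N + 1), BB q k M =
      ∑ r ∈ Finset.range (N + 1), al q r * q ^ (k * (r ^ 2 + r)) * UU q M r := by
    intro M hM
    have hM' := Finset.mem_range.mp hM
    refine Finset.sum_subset (Finset.range_subset_range.mpr (by omega)) fun r _ hr => ?_
    have : ¬ r < M + 1 := fun h => hr (Finset.mem_range.mpr h)
    rw [UU, if_neg (by omega), mul_zero]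
  have : ∀ M ∈ Finset.range (N + 1), q ^ (M ^ 2 + M) * bR q N M * (qq q M * BB q k M) =
      ∑ r ∈ Finset.range (N + 1), qq q N * (al q r * q ^ (k * (r ^ 2 + r)) *
        (q ^ (M ^ 2 + M) / qq q (N - M) * UU q M r)) := by
    intro M hM
    rw [hext M hM, Finset.mul_sum, Finset.mul_sum]
    refine Finset.sum_congr rfl fun r _ => ?_
    rw [bR, if_pos (Nat.lt_succ_iff.mp (Finset.mem_range.mp hM))]
    have c1 := hne (N - M)
    have c2 := hne M
    field_simp
  rw [Finset.sum_congr rfl this, Finset.sum_comm, BB, Finset.mul_sum]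
  refine Finset.sum_congr rfl fun r hr => ?_
  rw [← Finset.mul_sum, ← Finset.mul_sum,
    bailey_step h0 h1 N r (Nat.lt_succ_iff.mp (Finset.mem_range.mp hr))]
  ring

/-- Summand of the nonterminating sum. -/
noncomputable def ww (q : ℝ) (r t j : ℕ) : ℝ :=
  (-1) ^ j * q ^ (tri j + t * j) * qq q (r + j) / (qq q j * qq q (r + t + 1 + j))


lemma ww_bound {q : ℝ} (h0 : 0 < q) (h1 : q < 1) (r t : ℕ) : ∃ C : ℝ, ∀ j, ‖ww q r t j‖ ≤ C * q ^ j := by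
  obtain ⟨c, hc, hl⟩ := qq_lower h0 h1
  refine ⟨1 / (c * c), fun j => ?_⟩
  have e : ‖ww q r t j‖ = q ^ (tri j + t * j) * qq q (r + j) / (qq q j * qq q (r + t + 1 + j)) := by
    simp only [ww, norm_div, norm_mul, norm_pow, norm_neg, norm_one, one_pow, one_mul,
      Real.norm_of_nonneg h0.le, Real.norm_of_nonneg (qq_pos h0 h1 _).le]
  rw [e, div_mul_eq_mul_div, one_mul]
  have p1 := qq_pos h0 h1 j
  have p2 := qq_pos h0 h1 (r + t + 1 + j)
  apply div_le_div₀ (by positivity) _ (by positivity) (mul_le_mul (hl _) (hl _) hc.le p1.le)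
  calc q ^ (tri j + t * j) * qq q (r + j) ≤ q ^ j * 1 := by
        apply mul_le_mul _ (qq_le_one h0 h1 _) (qq_pos h0 h1 _).le (by positivity)
        exact pow_le_pow_of_le_one h0.le h1.le ((le_tri j).trans (Nat.le_add_right _ _))
    _ = q ^ j := mul_one _

lemma ww_summable {q : ℝ} (h0 : 0 < q) (h1 : q < 1) (r t : ℕ) : Summable (ww q r t) := by
  obtain ⟨C, hC⟩ := ww_bound h0 h1 r t
  exact Summable.of_norm_bounded ((summable_geometric_of_lt_one h0.le h1).mul_left C) hC

/-- telescoping series -/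
lemma tele {q : ℝ} (h0 : 0 < q) (h1 : q < 1) (r t : ℕ) (f : ℕ → ℝ) (b : ℕ → ℝ) (hb : ∀ j, ‖b j‖ ≤ 1) (hf : Summable f)
    (h : ∀ j, f j = b j * ww q r t j - b (j + 1) * ww q r t (j + 1)) :
    HasSum f (b 0 * ww q r t 0) := by
  rw [hf.hasSum_iff_tendsto_nat]
  have : ∀ n, ∑ i ∈ Finset.range n, f i = b 0 * ww q r t 0 - b n * ww q r t n := by
    intro n
    rw [Finset.sum_congr rfl fun j _ => h j]
    exact Finset.sum_range_sub' (fun j => b j * ww q r t j) n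
  simp only [this]
  have lim : Filter.Tendsto (fun n => b n * ww q r t n) Filter.atTop (nhds 0) := by
    apply squeeze_zero_norm (a := fun n => ‖ww q r t n‖)
    · intro n
      rw [norm_mul]
      exact mul_le_of_le_one_left (norm_nonneg _) (hb n)
    · simpa using (ww_summable h0 h1 r t).tendsto_atTop_zero.norm
  simpa using lim.const_sub (b 0 * ww q r t 0)

lemma fac_norm {q : ℝ} (h0 : 0 < q) (h1 : q < 1) (j : ℕ) : ‖1 - q ^ j‖ ≤ 1 := by
  have a := pow_le_one₀ h0.le h1.le (n := j)
  have b := pow_pos h0 j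
  rw [Real.norm_of_nonneg (by linarith)]; linarith

lemma ww_hasSum {q : ℝ} (h0 : 0 < q) (h1 : q < 1) (t r : ℕ) : HasSum (ww q r t) (qq q r / qq q t) := by
  have hne : ∀ n, qq q n ≠ 0 := fun n => (qq_pos h0 h1 n).ne'
  induction r with
  | zero =>
    have := tele h0 h1 0 t (ww q 0 t) (fun j => 1 - q ^ (t + j + 1))
      (fun j => fac_norm h0 h1 _) (ww_summable h0 h1 0 t) ?_
    · refine hs_congr this (fun j => rfl) ?_
      simp only [ww, tri_zero, qq_zero, add_zero, zero_add, mul_zero, pow_zero]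
      rw [qq_succ]
      have c1 := hne t
      have c2 := (fac_pos h0 h1 t).ne'
      field_simp
    · intro j
      simp only [ww, tri_succ, zero_add]
      rw [show t + 1 + (j + 1) = (t + j + 1) + 1 by ring, show t + 1 + j = t + j + 1 by ring,
        show t + (j + 1) + 1 = t + j + 1 + 1 by ring,
        qq_succ q (t + j + 1)]
      have c1 := hne j
      have c3 := hne (j + 1)
      have c2 := (fac_pos h0 h1 (t + j + 1)).ne'
      have c4 := hne (t + j + 1)
      field_simp
      ring
  | succ r ih =>
    have := tele h0 h1 r t (fun j => ww q (r + 1) t j - (1 - q ^ (r + 1)) * ww q r t j)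
      (fun j => q ^ (r + 1) * (1 - q ^ j)) ?_
      ((ww_summable h0 h1 (r + 1) t).sub ((ww_summable h0 h1 r t).mul_left _)) ?_
    · have h2 := this.add (ih.mul_left (1 - q ^ (r + 1)))
      refine hs_congr h2 (fun j => ?_) ?_
      · ring
      · rw [qq_succ]; simp; ring
    · intro j
      rw [norm_mul]
      apply mul_le_one₀ _ (norm_nonneg _) (fac_norm h0 h1 j)
      rw [norm_pow, Real.norm_of_nonneg h0.le]
      exact pow_le_one₀ h0.le h1.le
    · intro j
      simp only [ww, tri_succ]
      rw [show r + 1 + t + 1 + j = (r + t + 1 + j) + 1 by ring,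
        show r + t + 1 + (j + 1) = (r + t + 1 + j) + 1 by ring,
        show r + 1 + j = r + j + 1 by ring, show r + (j + 1) = r + j + 1 by ring,
        qq_succ q (r + t + 1 + j), qq_succ q (r + j), qq_succ q j]
      have c1 := hne j
      have c2 := (fac_pos h0 h1 j).ne'
      have c3 := hne (r + t + 1 + j)
      have c4 := (fac_pos h0 h1 (r + t + 1 + j)).ne'
      field_simp
      ring

lemma UU_hasSum {q : ℝ} (h0 : 0 < q) (h1 : q < 1) (r : ℕ) : HasSum (fun N => (-1) ^ N * q ^ tri N * qq q N * UU q N r)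
    ((-1) ^ r * q ^ tri r) := by
  have hw := (ww_hasSum h0 h1 r r).mul_left ((-1) ^ r * q ^ tri r)
  rw [div_self (qq_pos h0 h1 r).ne', mul_one] at hw
  have inj : Function.Injective (fun j => r + j) := fun a b h => by simpa using h
  rw [← inj.hasSum_iff]
  · refine hs_congr hw (fun j => ?_) rfl
    simp only [Function.comp, UU, ww]
    rw [if_pos (by omega), tri_add, show r + j - r = j by omega,
      show r + j + r + 1 = r + r + 1 + j by ring]
    ring
  · intro N hN
    have : ¬ r ≤ N := fun h => hN ⟨N - r, by simp; omega⟩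
    simp [UU, this]

lemma al_norm {q : ℝ} (h0 : 0 < q) (h1 : q < 1) (r : ℕ) : ‖al q r‖ ≤ q ^ r := by
  simp only [al, norm_mul, norm_pow, norm_neg, norm_one, one_pow, one_mul]
  rw [Real.norm_of_nonneg h0.le]
  calc q ^ (r ^ 2) * ‖1 - q ^ (2 * r + 1)‖ ≤ q ^ r * 1 := by
        apply mul_le_mul _ (fac_norm h0 h1 _) (norm_nonneg _) (by positivity)
        exact pow_le_pow_of_le_one h0.le h1.le (by nlinarith [Nat.zero_le r, sq_nonneg r, Nat.le_self_pow two_ne_zero r])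
    _ = q ^ r := mul_one _

lemma UU_bound {q : ℝ} (h0 : 0 < q) (h1 : q < 1) : ∃ C : ℝ, 0 ≤ C ∧ ∀ N r, ‖UU q N r‖ ≤ C := by
  obtain ⟨c, hc, hl⟩ := qq_lower h0 h1
  refine ⟨1 / (c * c), by positivity, fun N r => ?_⟩
  unfold UU
  split_ifs
  · have p1 := qq_pos h0 h1 (N - r)
    have p2 := qq_pos h0 h1 (N + r + 1)
    rw [Real.norm_of_nonneg (by positivity)]
    exact one_div_le_one_div_of_le (by positivity) (mul_le_mul (hl _) (hl _) hc.le p1.le)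
  · rw [norm_zero]; positivity

lemma dbl_summable {q : ℝ} (h0 : 0 < q) (h1 : q < 1) (k : ℕ) (s : ℝ) (hs : ‖s‖ = 1) : Summable (fun p : ℕ × ℕ =>
    (s ^ p.1 * q ^ tri p.1 * qq q p.1) * (al q p.2 * q ^ (k * (p.2 ^ 2 + p.2)) * UU q p.1 p.2)) := by
  obtain ⟨C, hC, hU⟩ := UU_bound h0 h1
  have g := summable_geometric_of_lt_one h0.le h1
  have := (g.mul_of_nonneg g (fun _ => by positivity) (fun _ => by positivity)).mul_right C
  refine Summable.of_norm_bounded this ?_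
  rintro ⟨N, r⟩
  simp only [norm_mul, norm_pow, hs, one_pow, one_mul, Real.norm_of_nonneg h0.le,
    Real.norm_of_nonneg (qq_pos h0 h1 _).le]
  have i1 : q ^ tri N ≤ q ^ N := pow_le_pow_of_le_one h0.le h1.le (le_tri N)
  have i2 := qq_le_one h0 h1 N
  have i3 := al_norm h0 h1 r
  have i4 : q ^ (k * (r ^ 2 + r)) ≤ 1 := pow_le_one₀ h0.le h1.le
  have i5 := hU N r
  have p := (qq_pos h0 h1 N).le
  calc q ^ tri N * qq q N * (‖al q r‖ * q ^ (k * (r ^ 2 + r)) * ‖UU q N r‖)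
      ≤ q ^ N * 1 * (q ^ r * 1 * C) := by gcongr
    _ = _ := by ring

lemma fib_hasSum {q : ℝ} (_h0 : 0 < q) (_h1 : q < 1) (k N : ℕ) (x : ℝ) : HasSum (fun r : ℕ =>
    x * (al q r * q ^ (k * (r ^ 2 + r)) * UU q N r)) (x * BB q k N) := by
  apply HasSum.mul_left
  apply hasSum_sum_of_ne_finset_zero
  intro r hr
  have : ¬ r < N + 1 := fun h => hr (Finset.mem_range.mpr h)
  rw [UU, if_neg (by omega), mul_zero]

lemma abs_fib_summable {q : ℝ} (h0 : 0 < q) (h1 : q < 1) (k : ℕ) : Summable (fun N => q ^ tri N * (qq q N * BB q k N)) := by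
  have hs := (dbl_summable h0 h1 k 1 (by simp)).hasSum
  have h := hs.prod_fiberwise (g := fun N => (1 ^ N * q ^ tri N * qq q N) * BB q k N)
    (fun N => fib_hasSum h0 h1 k N (1 ^ N * q ^ tri N * qq q N))
  exact (hs_congr h (fun N => by ring) rfl).summable

lemma main_real {q : ℝ} (h0 : 0 < q) (h1 : q < 1) (k : ℕ) : ∃ S, HasSum (fun N => (-1) ^ N * q ^ tri N * (qq q N * BB q k N)) S ∧
    HasSum (fun r : ℕ => q ^ (tri r + k * (r ^ 2 + r) + r ^ 2) * (1 - q ^ (2 * r + 1))) S := by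
  have hs := (dbl_summable h0 h1 k (-1) (by simp)).hasSum
  refine ⟨∑' p : ℕ × ℕ, ((-1) ^ p.1 * q ^ tri p.1 * qq q p.1) *
    (al q p.2 * q ^ (k * (p.2 ^ 2 + p.2)) * UU q p.1 p.2), ?_, ?_⟩
  · have h := hs.prod_fiberwise (g := fun N => ((-1) ^ N * q ^ tri N * qq q N) * BB q k N)
      (fun N => fib_hasSum h0 h1 k N ((-1) ^ N * q ^ tri N * qq q N))
    exact hs_congr h (fun N => by ring) rfl
  · have hs' := (Equiv.prodComm ℕ ℕ).hasSum_iff.mpr hs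
    have := hs'.prod_fiberwise (g := fun r =>
      al q r * q ^ (k * (r ^ 2 + r)) * ((-1) ^ r * q ^ tri r)) (fun r => by
        refine hs_congr ((UU_hasSum h0 h1 r).mul_left (al q r * q ^ (k * (r ^ 2 + r))))
          (fun N => ?_) rfl
        simp only [Function.comp, Equiv.prodComm_apply, Prod.swap]; ring)
    refine hs_congr this (fun r => ?_) rfl
    have : ((-1 : ℝ) ^ r) * (-1) ^ r = 1 := by rw [← mul_pow]; simp
    rw [al, pow_add, pow_add]
    linear_combination (-(q ^ tri r * q ^ (k * (r ^ 2 + r)) * q ^ r ^ 2 * (1 - q ^ (2 * r + 1)))) * this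

/-! The multi-sum. -/

/-- multi-sum term without the last variable weight. -/
noncomputable def TT (q : ℝ) (k : ℕ) (n : ℕ → ℕ) : ℝ :=
  q ^ (∑ j ∈ Finset.range k, ((n j) ^ 2 + n j)) / nq q (n 0) *
    ∏ i ∈ Finset.range k, bR q (n (i + 1)) (n i)

/-- Extend a tuple by a constant. -/
def extC (k : ℕ) (g : Fin k → ℕ) (N : ℕ) : ℕ → ℕ := fun j => if h : j < k then g ⟨j, h⟩ else N

lemma TT_succ (q : ℝ) (k : ℕ) (n : ℕ → ℕ) :
    TT q (k + 1) n = TT q k n * (q ^ ((n k) ^ 2 + n k) * bR q (n (k + 1)) (n k)) := by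
  simp only [TT, Finset.sum_range_succ, Finset.prod_range_succ, pow_add]; ring

lemma TT_congr (q : ℝ) (k : ℕ) (n n' : ℕ → ℕ) (h : ∀ j ≤ k, n j = n' j) : TT q k n = TT q k n' := by
  unfold TT
  rw [h 0 (Nat.zero_le _)]
  congr 1
  · congr 2
    refine Finset.sum_congr rfl fun j hj => ?_
    rw [h j (Finset.mem_range.mp hj).le]
  · refine Finset.prod_congr rfl fun j hj => ?_
    rw [h j (Finset.mem_range.mp hj).le, h (j + 1) (Finset.mem_range.mp hj)]

lemma prod_hasSum {β : Type*} (f : ℕ × β → ℝ) (s t : ℕ → ℝ) (a : ℝ)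
    (h1 : ∀ n, HasSum (fun b => ‖f (n, b)‖) (s n)) (h2 : Summable s)
    (h3 : ∀ n, HasSum (fun b => f (n, b)) (t n)) (h4 : HasSum t a) : HasSum f a := by
  have hs : Summable f := by
    apply Summable.of_norm
    rw [summable_prod_of_nonneg (fun _ => norm_nonneg _)]
    refine ⟨fun n => (h1 n).summable, ?_⟩
    refine h2.congr (fun n => ?_)
    exact (h1 n).tsum_eq.symm
  have := hs.hasSum.prod_fiberwise h3
  rw [h4.unique this]
  exact hs.hasSum

/-- `snoc` as an equivalence. -/
def snocE (k : ℕ) : ℕ × (Fin k → ℕ) ≃ (Fin (k + 1) → ℕ) := Fin.snocEquiv (fun _ => ℕ)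

lemma snocE_lt (k : ℕ) (p : ℕ × (Fin k → ℕ)) (j : ℕ) (h : j < k) :
    snocE k p ⟨j, by omega⟩ = p.2 ⟨j, h⟩ := by
  simp [snocE, Fin.snocEquiv, Fin.snoc, h]

lemma snocE_last (k : ℕ) (p : ℕ × (Fin k → ℕ)) :
    snocE k p ⟨k, by omega⟩ = p.1 := by
  simp [snocE, Fin.snocEquiv, Fin.snoc]


lemma bR_nonneg {q : ℝ} (h0 : 0 < q) (h1 : q < 1) (n k : ℕ) : 0 ≤ bR q n k := by
  unfold bR
  split_ifs
  · have p1 := qq_pos h0 h1 (n - k)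
    have p2 := qq_pos h0 h1 n
    have p3 := qq_pos h0 h1 k
    positivity
  · exact le_rfl

lemma TT_nonneg {q : ℝ} (h0 : 0 < q) (h1 : q < 1) (k : ℕ) (n : ℕ → ℕ) : 0 ≤ TT q k n := by
  have p1 := nq_pos h0 h1 (n 0)
  exact mul_nonneg (by positivity) (Finset.prod_nonneg fun i _ => bR_nonneg h0 h1 _ _)

lemma TT_hasSum {q : ℝ} (h0 : 0 < q) (h1 : q < 1) (k : ℕ) : ∀ N, HasSum (fun g : Fin k → ℕ => TT q k (extC k g N))
    (qq q N * BB q k N) := by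
  induction k with
  | zero =>
    intro N
    have e : TT q 0 (extC 0 (default : Fin 0 → ℕ) N) = qq q N * BB q 0 N := by
      rw [bailey_init h0 h1]
      have := (qq_pos h0 h1 N).ne'
      have := (nq_pos h0 h1 N).ne'
      simp [TT, extC]
      field_simp
    rw [← e]
    exact hasSum_unique (fun g : Fin 0 → ℕ => TT q 0 (extC 0 g N))
  | succ k ih =>
    intro N
    rw [← (snocE k).hasSum_iff]
    have key : ∀ p : ℕ × (Fin k → ℕ), TT q (k + 1) (extC (k + 1) (snocE k p) N) =
        q ^ (p.1 ^ 2 + p.1) * bR q N p.1 * TT q k (extC k p.2 p.1) := by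
      intro p
      have e1 : extC (k + 1) (snocE k p) N k = p.1 := by
        simp only [extC, Nat.lt_succ_self, dif_pos]; exact snocE_last k p
      have e2 : extC (k + 1) (snocE k p) N (k + 1) = N := by simp [extC]
      rw [TT_succ, e1, e2, TT_congr q k _ (extC k p.2 p.1)]
      · ring
      · intro j hj
        rcases hj.lt_or_eq with h | rfl
        · have h' : j < k + 1 := by omega
          simp only [extC, h, h', dif_pos]
          exact snocE_lt k p j h
        · rw [e1]; simp [extC]
    have fin : HasSum (fun M => q ^ (M ^ 2 + M) * bR q N M * (qq q M * BB q k M))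
        (qq q N * BB q (k + 1) N) := by
      rw [← BB_succ h0 h1]
      apply hasSum_sum_of_ne_finset_zero
      intro M hM
      have : ¬ M < N + 1 := fun h => hM (Finset.mem_range.mpr h)
      rw [bR, if_neg (by omega)]; ring
    refine prod_hasSum _ _ _ _ (fun M => ?_) fin.summable (fun M => ?_) fin
    · simp only [Function.comp, key]
      refine hs_congr ((ih M).mul_left (q ^ (M ^ 2 + M) * bR q N M)) (fun g => ?_) rfl
      have := bR_nonneg h0 h1 N M
      have := TT_nonneg h0 h1 k (extC k g M)
      exact Real.norm_of_nonneg (by positivity)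
    · simp only [Function.comp, key]
      exact (ih M).mul_left _

lemma P_hasSum {q : ℝ} (h0 : 0 < q) (h1 : q < 1) (k : ℕ) (S : ℝ)
    (hS : HasSum (fun N => (-1) ^ N * q ^ tri N * (qq q N * BB q k N)) S) :
    HasSum (fun n : Fin (k + 1) → ℕ => (-1) ^ (pad (k + 1) n k) * q ^ tri (pad (k + 1) n k) *
      TT q k (pad (k + 1) n)) S := by
  rw [← (snocE k).hasSum_iff]
  have key : ∀ p : ℕ × (Fin k → ℕ), pad (k + 1) (snocE k p) k = p.1 ∧
      TT q k (pad (k + 1) (snocE k p)) = TT q k (extC k p.2 p.1) := by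
    intro p
    have e1 : pad (k + 1) (snocE k p) k = p.1 := by
      simp only [pad, Nat.lt_succ_self, dif_pos]; exact snocE_last k p
    refine ⟨e1, TT_congr q k _ _ fun j hj => ?_⟩
    rcases hj.lt_or_eq with h | rfl
    · have h' : j < k + 1 := by omega
      simp only [extC, pad, h, h', dif_pos]
      exact snocE_lt k p j h
    · rw [e1]; simp [extC]
  refine prod_hasSum _ _ _ _ (fun M => ?_) (abs_fib_summable h0 h1 k) (fun M => ?_) hS
  · simp only [Function.comp, key]
    refine hs_congr ((TT_hasSum h0 h1 k M).mul_left (q ^ tri M)) (fun g => ?_) rfl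
    rw [norm_mul, norm_mul, Real.norm_of_nonneg (TT_nonneg h0 h1 k _)]
    simp [abs_of_pos h0]
  · simp only [Function.comp, key]
    exact (TT_hasSum h0 h1 k M).mul_left _

lemma qPoch_q (q : ℝ) (n : ℕ) : qPoch (q : ℂ) q n = (qq q n : ℂ) := by
  simp only [qPoch, qq]
  push_cast
  exact Finset.prod_congr rfl fun j _ => by ring

lemma qPoch_neg (q : ℝ) (n : ℕ) : qPoch (-(q : ℂ)) q n = (nq q n : ℂ) := by
  simp only [qPoch, nq]
  push_cast
  exact Finset.prod_congr rfl fun j _ => by ring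

lemma qBinom_eq (q : ℝ) (n k : ℕ) : qBinom (q : ℂ) n k = (bR q n k : ℂ) := by
  unfold qBinom bR
  split_ifs
  · simp only [qPoch_q]; push_cast; rfl
  · simp

lemma Pterm_eq (q : ℝ) (k : ℕ) (n : ℕ → ℕ) : Pterm (k + 2) (q : ℂ) n =
    (((-1) ^ (n k) * q ^ tri (n k) * TT q k n : ℝ) : ℂ) := by
  simp only [Pterm, TT, Nat.add_sub_cancel, qPoch_neg, qBinom_eq, tri, pow_add]
  push_cast
  ring

lemma chi_hasSum (k : ℕ) {q : ℝ} (h0 : 0 < q) (h1 : q < 1) (S : ℝ)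
    (hS : HasSum (fun r : ℕ => q ^ (tri r + k * (r ^ 2 + r) + r ^ 2) * (1 - q ^ (2 * r + 1))) S) :
    HasSum (fun j : ℕ => (chiP (k + 2) j : ℝ) *
      q ^ ((j : ℝ) ^ 2 / (8 * (2 * ((k + 2 : ℕ) : ℝ) - 1))))
      (q ^ ((2 * ((k + 2 : ℕ) : ℝ) - 3) ^ 2 / (8 * (2 * ((k + 2 : ℕ) : ℝ) - 1))) * S) := by
  have g := summable_geometric_of_lt_one h0.le h1
  have s1 : Summable (fun r : ℕ => q ^ (tri r + k * (r ^ 2 + r) + r ^ 2)) := by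
    refine Summable.of_nonneg_of_le (fun _ => by positivity) (fun r => ?_) g
    exact pow_le_pow_of_le_one h0.le h1.le (by have := le_tri r; omega)
  have s2 : Summable (fun r : ℕ => q ^ (tri r + k * (r ^ 2 + r) + r ^ 2 + (2 * r + 1))) := by
    refine Summable.of_nonneg_of_le (fun _ => by positivity) (fun r => ?_) g
    exact pow_le_pow_of_le_one h0.le h1.le (by omega)
  have hSe : S = (∑' r : ℕ, q ^ (tri r + k * (r ^ 2 + r) + r ^ 2)) -
      ∑' r : ℕ, q ^ (tri r + k * (r ^ 2 + r) + r ^ 2 + (2 * r + 1)) := by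
    refine hS.unique ?_
    refine hs_congr (s1.hasSum.sub s2.hasSum) (fun r => ?_) rfl
    rw [pow_add _ _ (2 * r + 1)]; ring
  set D : ℝ := 8 * (2 * ((k + 2 : ℕ) : ℝ) - 1) with hD
  have hDv : D = 8 * (2 * k + 3) := by rw [hD]; push_cast; ring
  have hD0 : D ≠ 0 := by rw [hDv]; positivity
  have htri : ∀ r : ℕ, (tri r : ℝ) = r * (r + 1) / 2 := by
    intro r
    induction r with
    | zero => simp [tri]
    | succ r ih => rw [tri_succ]; push_cast; rw [ih]; ring
  set Q := q ^ ((2 * ((k + 2 : ℕ) : ℝ) - 3) ^ 2 / D) with hQ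
  have f1 : HasSum (fun j : ℕ => if j % (4 * k + 6) = 2 * k + 1 then q ^ ((j : ℝ) ^ 2 / D) else 0)
      (Q * ∑' r : ℕ, q ^ (tri r + k * (r ^ 2 + r) + r ^ 2)) := by
    have inj : Function.Injective (fun r : ℕ => (4 * k + 6) * r + (2 * k + 1)) := fun a b h => by
      simpa using h
    rw [← inj.hasSum_iff]
    · refine hs_congr (s1.hasSum.mul_left Q) (fun r => ?_) rfl
      simp only [Function.comp]
      rw [if_pos (by rw [Nat.mul_add_mod]; exact Nat.mod_eq_of_lt (by omega)), hQ,
        ← Real.rpow_natCast q (tri r + k * (r ^ 2 + r) + r ^ 2), ← Real.rpow_add h0]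
      congr 1
      push_cast
      rw [htri]
      field_simp
      rw [hDv]
      ring
    · intro j hj
      rw [if_neg]
      intro h
      exact hj ⟨j / (4 * k + 6), by simp only; rw [← h]; exact Nat.div_add_mod j (4 * k + 6)⟩
  have f2 : HasSum (fun j : ℕ => if j % (4 * k + 6) = 2 * k + 5 then q ^ ((j : ℝ) ^ 2 / D) else 0)
      (Q * ∑' r : ℕ, q ^ (tri r + k * (r ^ 2 + r) + r ^ 2 + (2 * r + 1))) := by
    have inj : Function.Injective (fun r : ℕ => (4 * k + 6) * r + (2 * k + 5)) := fun a b h => by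
      simpa using h
    rw [← inj.hasSum_iff]
    · refine hs_congr (s2.hasSum.mul_left Q) (fun r => ?_) rfl
      simp only [Function.comp]
      rw [if_pos (by rw [Nat.mul_add_mod]; exact Nat.mod_eq_of_lt (by omega)), hQ,
        ← Real.rpow_natCast q (tri r + k * (r ^ 2 + r) + r ^ 2 + (2 * r + 1)),
        ← Real.rpow_add h0]
      congr 1
      push_cast
      rw [htri]
      field_simp
      rw [hDv]
      ring
    · intro j hj
      rw [if_neg]
      intro h
      exact hj ⟨j / (4 * k + 6), by simp only; rw [← h]; exact Nat.div_add_mod j (4 * k + 6)⟩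
  rw [hSe, mul_sub]
  refine hs_congr (f1.sub f2) (fun j => ?_) rfl
  have hm : (4 * ((k + 2 : ℕ) : ℤ) - 2) = ((4 * k + 6 : ℕ) : ℤ) := by push_cast; ring
  have c1 : ((j : ℤ) % (4 * ((k + 2 : ℕ) : ℤ) - 2) =
      (2 * ((k + 2 : ℕ) : ℤ) - 3) % (4 * ((k + 2 : ℕ) : ℤ) - 2)) ↔ j % (4 * k + 6) = 2 * k + 1 := by
    have : (2 * ((k + 2 : ℕ) : ℤ) - 3) = ((2 * k + 1 : ℕ) : ℤ) := by push_cast; ring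
    rw [hm, this, ← Int.natCast_mod, ← Int.natCast_mod, Nat.mod_eq_of_lt (a := 2 * k + 1) (by omega)]
    exact Nat.cast_inj
  have c2 : ((j : ℤ) % (4 * ((k + 2 : ℕ) : ℤ) - 2) =
      (2 * ((k + 2 : ℕ) : ℤ) + 1) % (4 * ((k + 2 : ℕ) : ℤ) - 2)) ↔ j % (4 * k + 6) = 2 * k + 5 := by
    have : (2 * ((k + 2 : ℕ) : ℤ) + 1) = ((2 * k + 5 : ℕ) : ℤ) := by push_cast; ring
    rw [hm, this, ← Int.natCast_mod, ← Int.natCast_mod, Nat.mod_eq_of_lt (a := 2 * k + 5) (by omega)]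
    exact Nat.cast_inj
  simp only [chiP, c1, c2]
  by_cases x1 : j % (4 * k + 6) = 2 * k + 1
  · have x2 : ¬ j % (4 * k + 6) = 2 * k + 5 := by omega
    simp [x1]
  · by_cases x2 : j % (4 * k + 6) = 2 * k + 5
    · simp [x2]
    · simp [x1, x2]

theorem stmt7 (m : ℕ) (hm : 2 ≤ m) (q : ℝ) (hq0 : 0 < q) (hq1 : q < 1) :
    ((2 * (m : ℂ) - 1) / 2) *
        ((q ^ ((2 * (m : ℝ) - 3) ^ 2 / (8 * (2 * m - 1))) : ℝ) : ℂ) * P m (q : ℂ) =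
      ((2 * (m : ℂ) - 1) / 2) *
        ∑' k : ℕ, (chiP m k : ℂ) * ((q ^ ((k : ℝ) ^ 2 / (8 * (2 * (m : ℝ) - 1))) : ℝ) : ℂ) := by
  obtain ⟨k, rfl⟩ := Nat.exists_eq_add_of_le' hm
  obtain ⟨S, hS1, hS2⟩ := main_real hq0 hq1 k
  have hP : P (k + 2) (q : ℂ) = (S : ℂ) := by
    have := P_hasSum hq0 hq1 k S hS1
    have h2 : HasSum (fun n : Fin (k + 1) → ℕ => Pterm (k + 2) (q : ℂ) (pad (k + 1) n)) (S : ℂ) := by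
      simp only [Pterm_eq]
      exact Complex.hasSum_ofReal.mpr this
    exact h2.tsum_eq
  have hc := Complex.hasSum_ofReal.mpr (chi_hasSum k hq0 hq1 S hS2)
  have hc' : ∑' j : ℕ, (chiP (k + 2) j : ℂ) *
      ((q ^ ((j : ℝ) ^ 2 / (8 * (2 * ((k + 2 : ℕ) : ℝ) - 1))) : ℝ) : ℂ) =
      ((q ^ ((2 * ((k + 2 : ℕ) : ℝ) - 3) ^ 2 / (8 * (2 * ((k + 2 : ℕ) : ℝ) - 1))) * S : ℝ) : ℂ) := by
    rw [← hc.tsum_eq]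
    refine tsum_congr fun j => ?_
    rw [Complex.ofReal_mul, Complex.ofReal_intCast]
  rw [hc', hP, Complex.ofReal_mul, mul_assoc]
end

section
/- Let m ≥ 2 be an integer and let M, N be coprime integers with N odd and positive. Then lim_{t→0⁺} ((2m−1)/2)·Σ_{k=0}^{∞} χ_{4m−2}(k)·e^{(2πiM/N − t)·k²/(8(2m−1))} = −(1/(8(2m−1)N²))·Σ_{k=0}^{(4m−2)N} k²·χ_{4m−2}(k)·e^{2πiMk²/(8(2m−1)N)}. -/
open Finset

lemma aux_hd1 (s x : ℝ) : HasDerivAt (fun x : ℝ => Real.exp (-s * x ^ 2))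
    (-2 * s * x * Real.exp (-s * x ^ 2)) x := by
  have h : HasDerivAt (fun x : ℝ => -s * x ^ 2) (-s * (2 * x)) x := by
    simpa using (hasDerivAt_pow 2 x).const_mul (-s)
  convert h.exp using 1
  ring

lemma aux_hd2 (s x : ℝ) : HasDerivAt (fun x : ℝ => -2 * s * x * Real.exp (-s * x ^ 2))
    ((-2 * s + 4 * s ^ 2 * x ^ 2) * Real.exp (-s * x ^ 2)) x := by
  have h : HasDerivAt (fun x : ℝ => -2 * s * x) (-2 * s) x := by
    simpa using (hasDerivAt_id x).const_mul (-2 * s)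
  refine (h.mul (aux_hd1 s x)).congr_deriv ?_
  ring

lemma aux_f2 (s a x : ℝ) (hs : 0 < s) (ha : 0 < a) (hx : a ≤ x) :
    ‖(-2 * s + 4 * s ^ 2 * x ^ 2) * Real.exp (-s * x ^ 2)‖ ≤ 10 / a ^ 2 := by
  have hx0 : 0 < x := lt_of_lt_of_le ha hx
  have hy : 0 < s * x ^ 2 := by positivity
  have h1 := Real.add_one_le_exp (s * x ^ 2)
  have h2 := Real.quadratic_le_exp_of_nonneg hy.le
  have h3 : 10 / x ^ 2 ≤ 10 / a ^ 2 := by gcongr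
  refine le_trans ?_ h3
  rw [norm_mul, Real.norm_eq_abs, Real.norm_eq_abs, abs_of_pos (Real.exp_pos _),
    neg_mul s, Real.exp_neg, ← div_eq_mul_inv, div_le_div_iff₀ (Real.exp_pos _) (by positivity)]
  have h4 : |-2 * s + 4 * s ^ 2 * x ^ 2| ≤ 2 * s + 4 * s ^ 2 * x ^ 2 := by
    rw [abs_le]; constructor <;> nlinarith [sq_nonneg (s * x)]
  have h5 : |-2 * s + 4 * s ^ 2 * x ^ 2| * x ^ 2 ≤ (2 * s + 4 * s ^ 2 * x ^ 2) * x ^ 2 := by gcongr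
  nlinarith

lemma aux_err (s a P r : ℝ) (hs : 0 < s) (ha : 0 < a) (hr : 0 ≤ r) (hP : 0 < P) (hrP : r ≤ P) :
    |Real.exp (-s * (a + r) ^ 2) - Real.exp (-s * a ^ 2)
      - r / P * (Real.exp (-s * (a + P) ^ 2) - Real.exp (-s * a ^ 2))| ≤ 20 * P ^ 2 / a ^ 2 := by
  set f : ℝ → ℝ := fun x => Real.exp (-s * x ^ 2) with hf
  set f' : ℝ → ℝ := fun x => -2 * s * x * Real.exp (-s * x ^ 2) with hf'
  set K : ℝ := 10 / a ^ 2 with hK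
  have hK0 : 0 ≤ K := by positivity
  have hL : ∀ x ∈ Set.Icc a (a + P), ‖f' x - f' a‖ ≤ K * P := by
    intro x hx
    have := Convex.norm_image_sub_le_of_norm_hasDerivWithin_le (f := f') (s := Set.Icc a (a + P))
      (C := K) (x := a) (y := x)
      (fun y hy => (aux_hd2 s y).hasDerivWithinAt)
      (fun y hy => aux_f2 s a y hs ha hy.1) (convex_Icc _ _) ⟨le_rfl, by linarith⟩ hx
    refine this.trans ?_
    gcongr
    rw [Real.norm_eq_abs, abs_of_nonneg (by linarith [hx.1])]
    linarith [hx.2]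
  have hH : ∀ u, 0 ≤ u → u ≤ P → |f (a + u) - f a - u * f' a| ≤ K * P ^ 2 := by
    intro u hu huP
    have := Convex.norm_image_sub_le_of_norm_hasDerivWithin_le (f := fun x => f x - x * f' a)
      (f' := fun x => f' x - f' a)
      (s := Set.Icc a (a + P))
      (C := K * P) (x := a) (y := a + u)
      (fun y hy => by
        have h := (aux_hd1 s y).sub ((hasDerivAt_id y).mul_const (f' a))
        simp only [one_mul] at h
        exact h.hasDerivWithinAt)
      hL (convex_Icc _ _) ⟨le_rfl, by linarith⟩ ⟨by linarith, by linarith⟩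
    rw [Real.norm_eq_abs, Real.norm_eq_abs] at this
    calc _ = |f (a + u) - (a + u) * f' a - (f a - a * f' a)| := by congr 1; ring
      _ ≤ _ := this
      _ ≤ K * P * P := by
        gcongr
        rw [add_sub_cancel_left, abs_of_nonneg hu]; exact huP
      _ = _ := by ring
  have e : f (a + r) - f a - r / P * (f (a + P) - f a)
     = (f (a + r) - f a - r * f' a) - r / P * (f (a + P) - f a - P * f' a) := by
    field_simp; ring
  change |f (a + r) - f a - r / P * (f (a + P) - f a)| ≤ _
  rw [e]
  refine (abs_sub _ _).trans ?_
  rw [abs_mul, abs_of_nonneg (by positivity : 0 ≤ r / P)]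
  have h1 := hH r hr hrP
  have h2 := hH P hP.le le_rfl
  have h3 : r / P ≤ 1 := by rw [div_le_one hP]; exact hrP
  have h4 : r / P * |f (a + P) - f a - P * f' a| ≤ 1 * (K * P ^ 2) := by gcongr
  have h5 : 20 * P ^ 2 / a ^ 2 = 2 * (K * P ^ 2) := by rw [hK]; ring
  linarith

lemma aux_summ (s : ℝ) (hs : 0 < s) : Summable (fun k : ℕ => Real.exp (-s * (k : ℝ) ^ 2)) := by
  have h : Summable (fun k : ℕ => Real.exp ((k : ℝ) * (-s))) :=
    Real.summable_exp_nat_mul_iff.mpr (by linarith)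
  refine Summable.of_nonneg_of_le (fun _ => (Real.exp_pos _).le) (fun k => ?_) h
  apply Real.exp_le_exp.mpr
  have : (k : ℝ) ≤ (k : ℝ) ^ 2 := by exact_mod_cast Nat.le_self_pow (by norm_num) k
  nlinarith

lemma aux_summ' (s : ℝ) (hs : 0 < s) (P r : ℕ) (hP : 0 < P) :
    Summable (fun q : ℕ => Real.exp (-s * ((P : ℝ) * q + r) ^ 2)) := by
  have h := (aux_summ s hs).comp_injective (i := fun q : ℕ => P * q + r)
    (fun a b hab => by simpa [hP.ne'] using hab)
  refine h.congr (fun q => ?_)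
  simp

lemma aux_lim (P r : ℕ) (hP : 0 < P) (hr : r ≤ P) :
    Filter.Tendsto (fun s : ℝ => (∑' q : ℕ, Real.exp (-s * ((P : ℝ) * q + r) ^ 2))
      - ∑' q : ℕ, Real.exp (-s * ((P : ℝ) * q) ^ 2)) (nhdsWithin 0 (Set.Ioi 0))
      (nhds (-(r / P : ℝ))) := by
  have hP' : (0 : ℝ) < P := by exact_mod_cast hP
  have hr' : (r : ℝ) ≤ P := by exact_mod_cast hr
  set E : ℝ → ℕ → ℝ := fun s q => Real.exp (-s * ((P : ℝ) * q + r) ^ 2)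
      - Real.exp (-s * ((P : ℝ) * q) ^ 2) - (r / P : ℝ) * (Real.exp (-s * ((P : ℝ) * q + P) ^ 2)
      - Real.exp (-s * ((P : ℝ) * q) ^ 2)) with hE
  have key : Filter.Tendsto (fun s => ∑' q, E s q) (nhdsWithin 0 (Set.Ioi 0))
      (nhds (∑' _ : ℕ, (0 : ℝ))) := by
    apply tendsto_tsum_of_dominated_convergence (bound := fun q : ℕ => 80 * (1 / ((q : ℝ) + 1) ^ 2))
    · apply Summable.mul_left
      have := (summable_nat_add_iff 1).mpr (Real.summable_one_div_nat_pow.mpr (one_lt_two))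
      simpa using this
    · intro q
      have hc : Continuous (fun s => E s q) := by
        simp only [hE]; fun_prop
      have := hc.tendsto 0
      simp only [hE, neg_zero, zero_mul, Real.exp_zero, sub_self, mul_zero] at this
      exact this.mono_left nhdsWithin_le_nhds
    · filter_upwards [self_mem_nhdsWithin] with s hs q
      have hs : 0 < s := hs
      rw [Real.norm_eq_abs]
      rcases Nat.eq_zero_or_pos q with rfl | hq
      · have hb : ∀ x : ℝ, |Real.exp (-s * x ^ 2)| ≤ 1 := by
          intro x
          rw [abs_of_pos (Real.exp_pos _), Real.exp_le_one_iff]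
          nlinarith [sq_nonneg x]
        have hb0 := fun x : ℝ => Real.exp_pos (-s * x ^ 2)
        have h3 : (r : ℝ) / P ≤ 1 := by rw [div_le_one hP']; exact hr'
        have h3' : 0 ≤ (r : ℝ) / P := by positivity
        have a1 := abs_sub (Real.exp (-s * ((P : ℝ) * (0:ℕ) + r) ^ 2)
          - Real.exp (-s * ((P : ℝ) * (0:ℕ)) ^ 2)) ((r / P : ℝ) *
          (Real.exp (-s * ((P : ℝ) * (0:ℕ) + P) ^ 2) - Real.exp (-s * ((P : ℝ) * (0:ℕ)) ^ 2)))
        have a2 := abs_sub (Real.exp (-s * ((P : ℝ) * (0:ℕ) + r) ^ 2))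
          (Real.exp (-s * ((P : ℝ) * (0:ℕ)) ^ 2))
        have a3 := abs_sub (Real.exp (-s * ((P : ℝ) * (0:ℕ) + P) ^ 2))
          (Real.exp (-s * ((P : ℝ) * (0:ℕ)) ^ 2))
        rw [abs_mul, abs_of_nonneg h3'] at a1
        have b1 := hb ((P : ℝ) * (0:ℕ) + r)
        have b2 := hb ((P : ℝ) * (0:ℕ) + P)
        have b3 := hb ((P : ℝ) * (0:ℕ))
        have a4 : (r : ℝ) / P * |Real.exp (-s * ((P : ℝ) * (0:ℕ) + P) ^ 2)
          - Real.exp (-s * ((P : ℝ) * (0:ℕ)) ^ 2)| ≤ 1 * 2 := by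
          gcongr; linarith
        refine a1.trans ?_
        have a5 : (80 : ℝ) * (1 / (((0 : ℕ) : ℝ) + 1) ^ 2) = 80 := by norm_num
        rw [a5]
        exact (add_le_add (a2.trans (add_le_add b1 b3)) a4).trans (by norm_num)
      · have hq' : (1 : ℝ) ≤ q := by exact_mod_cast hq
        refine (aux_err s ((P : ℝ) * q) P r hs (by positivity) (by positivity) hP' hr').trans ?_
        rw [mul_one_div, mul_pow, mul_comm (20 : ℝ), mul_div_mul_left _ _ (by positivity),
          div_le_div_iff₀ (by positivity) (by positivity)]
        nlinarith
  have hsum : ∀ s ∈ Set.Ioi (0 : ℝ), (∑' q, E s q) - (r / P : ℝ) =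
      (∑' q : ℕ, Real.exp (-s * ((P : ℝ) * q + r) ^ 2))
      - ∑' q : ℕ, Real.exp (-s * ((P : ℝ) * q) ^ 2) := by
    intro s hs
    have s1 := aux_summ' s hs P r hP
    have s2 := aux_summ' s hs P P hP
    have s0 : Summable (fun q : ℕ => Real.exp (-s * ((P : ℝ) * q) ^ 2)) := by
      simpa using aux_summ' s hs P 0 hP
    have t : ∑' q : ℕ, Real.exp (-s * ((P : ℝ) * q) ^ 2)
        = 1 + ∑' q : ℕ, Real.exp (-s * ((P : ℝ) * q + P) ^ 2) := by
      rw [s0.tsum_eq_zero_add]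
      simp [mul_add]
    simp only [hE]
    rw [(s1.sub s0).tsum_sub ((s2.sub s0).mul_left _), s1.tsum_sub s0, tsum_mul_left,
      s2.tsum_sub s0, t]
    ring
  have := key.sub_const (r / P : ℝ)
  simp only [tsum_zero, zero_sub] at this
  refine this.congr' ?_
  filter_upwards [self_mem_nhdsWithin] with s hs using hsum s hs

lemma aux_main (C : ℕ → ℂ) (P : ℕ) (hP : 0 < P) (hper : ∀ k, C (k + P) = C k)
    (h0 : ∑ k ∈ Finset.range P, C k = 0) :
    Filter.Tendsto (fun s : ℝ => ∑' k : ℕ, C k * (Real.exp (-s * (k : ℝ) ^ 2) : ℂ))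
      (nhdsWithin 0 (Set.Ioi 0))
      (nhds (-(1 / (P : ℂ)) * ∑ k ∈ Finset.range P, (k : ℂ) * C k)) := by
  have : NeZero P := ⟨hP.ne'⟩
  have hper' : ∀ q r, C (r + P * q) = C r := by
    intro q r
    induction q with
    | zero => simp
    | succ q ih => rw [mul_add, mul_one, ← add_assoc, hper, ih]
  have hmod : ∀ k, C k = C (k % P) := fun k => by
    conv_lhs => rw [← Nat.mod_add_div k P]
    exact hper' _ _
  have hbd : ∀ k, ‖C k‖ ≤ ∑ j ∈ Finset.range P, ‖C j‖ := fun k => by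
    rw [hmod]
    exact Finset.single_le_sum (f := fun j => ‖C j‖) (fun _ _ => norm_nonneg _)
      (Finset.mem_range.mpr (Nat.mod_lt _ hP))
  have hl : Filter.Tendsto (fun s : ℝ => ∑ r ∈ Finset.range P, C r *
      (((∑' q : ℕ, Real.exp (-s * ((P : ℝ) * q + r) ^ 2))
      - ∑' q : ℕ, Real.exp (-s * ((P : ℝ) * q) ^ 2) : ℝ) : ℂ)) (nhdsWithin 0 (Set.Ioi 0))
      (nhds (∑ r ∈ Finset.range P, C r * ((-(r / P : ℝ) : ℝ) : ℂ))) := by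
    apply tendsto_finsetSum
    intro r hr
    exact ((Complex.continuous_ofReal.tendsto _).comp
      (aux_lim P r hP (Finset.mem_range.mp hr).le)).const_mul _
  have he : ∑ r ∈ Finset.range P, C r * ((-(r / P : ℝ) : ℝ) : ℂ)
      = -(1 / (P : ℂ)) * ∑ k ∈ Finset.range P, (k : ℂ) * C k := by
    rw [Finset.mul_sum]
    refine Finset.sum_congr rfl fun r _ => ?_
    push_cast; ring
  rw [he] at hl
  refine hl.congr' ?_
  filter_upwards [self_mem_nhdsWithin] with s hs
  have hS : Summable (fun k : ℕ => C k * (Real.exp (-s * (k : ℝ) ^ 2) : ℂ)) := by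
    refine Summable.of_norm_bounded ((aux_summ s hs).mul_left (∑ j ∈ Finset.range P, ‖C j‖)) ?_
    intro k
    rw [norm_mul, Complex.norm_real, Real.norm_eq_abs, abs_of_pos (Real.exp_pos _)]
    gcongr
    exact hbd k
  rw [Nat.sumByResidueClasses hS P]
  have hz : ∀ g : ℕ → ℂ, ∑ j : ZMod P, g j.val = ∑ r ∈ Finset.range P, g r := by
    intro g
    rw [← Fin.sum_univ_eq_sum_range]
    refine Fintype.sum_equiv (ZMod.finEquiv P).toEquiv.symm _ _ ?_
    intro j
    obtain _ | n := P
    · exact absurd hP (lt_irrefl _)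
    · rfl
  rw [hz (fun r => ∑' q : ℕ, C (r + P * q) * (Real.exp (-s * ((r + P * q : ℕ) : ℝ) ^ 2) : ℂ))]
  have h1 : ∑ r ∈ Finset.range P, C r *
      (((∑' q : ℕ, Real.exp (-s * ((P : ℝ) * q + r) ^ 2))
      - ∑' q : ℕ, Real.exp (-s * ((P : ℝ) * q) ^ 2) : ℝ) : ℂ) = 
      ∑ r ∈ Finset.range P, C r * ((∑' q : ℕ, Real.exp (-s * ((P : ℝ) * q + r) ^ 2) : ℝ) : ℂ) := by
    simp only [Complex.ofReal_sub, mul_sub, Finset.sum_sub_distrib]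
    rw [← Finset.sum_mul, h0, zero_mul, sub_zero]
  rw [h1]
  refine Finset.sum_congr rfl fun r _ => ?_
  simp only [hper']
  rw [tsum_mul_left, Complex.ofReal_tsum]
  congr 1
  refine tsum_congr fun q => ?_
  push_cast
  ring_nf

lemma chiP_add (m : ℕ) (k q : ℤ) : chiP m (k + (4 * m - 2) * q) = chiP m k := by
  unfold chiP
  rw [Int.add_mul_emod_self_left]

lemma chiP_zero (m : ℕ) (hm : 2 ≤ m) : chiP m 0 = 0 := by
  unfold chiP
  rw [Int.emod_eq_of_lt (a := 2 * (m : ℤ) - 3) (by omega) (by omega), Int.zero_emod]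
  rw [if_neg (by omega)]
  rcases hm.eq_or_lt with rfl | h
  · norm_num
  · rw [Int.emod_eq_of_lt (a := 2 * (m : ℤ) + 1) (by omega) (by omega), if_neg (by omega)]

lemma chiP_iff (m : ℕ) (a b : ℤ) :
    a % (4 * m - 2) = b % (4 * m - 2) ↔ (4 * (m : ℤ) - 2) ∣ a - b := by
  rw [Int.emod_eq_emod_iff_emod_sub_eq_zero, Int.dvd_iff_emod_eq_zero]

lemma chiP_neg (m : ℕ) (hm : 2 ≤ m) (k : ℤ) : chiP m (-k) = - chiP m k := by
  have h1 : (4 * (m : ℤ) - 2) ∣ -k - (2 * (m : ℤ) - 3) ↔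
      (4 * (m : ℤ) - 2) ∣ k - (2 * (m : ℤ) + 1) := by
    constructor
    · rintro ⟨c, hc⟩
      exact ⟨-c - 1, by linarith⟩
    · rintro ⟨c, hc⟩
      exact ⟨-c - 1, by linarith⟩
  have h2 : (4 * (m : ℤ) - 2) ∣ -k - (2 * (m : ℤ) + 1) ↔
      (4 * (m : ℤ) - 2) ∣ k - (2 * (m : ℤ) - 3) := by
    constructor
    · rintro ⟨c, hc⟩
      exact ⟨-c - 1, by linarith⟩
    · rintro ⟨c, hc⟩
      exact ⟨-c - 1, by linarith⟩
  have h3 : ¬ ((4 * (m : ℤ) - 2) ∣ k - (2 * (m : ℤ) - 3) ∧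
      (4 * (m : ℤ) - 2) ∣ k - (2 * (m : ℤ) + 1)) := by
    rintro ⟨a, b⟩
    have := dvd_sub a b
    have h4 : (4 * (m : ℤ) - 2) ∣ 4 := by
      rwa [show (k - (2 * (m : ℤ) - 3)) - (k - (2 * (m : ℤ) + 1)) = 4 by ring] at this
    have := Int.le_of_dvd (by norm_num) h4
    omega
  unfold chiP
  simp only [chiP_iff, h1, h2]
  split_ifs <;> simp_all

lemma chiP_odd (m : ℕ) (k : ℤ) (h : chiP m k ≠ 0) : ∃ j, k = 2 * j + 1 := by
  unfold chiP at h
  simp only [chiP_iff] at h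
  split_ifs at h with h1 h2
  · obtain ⟨c, hc⟩ := h1
    exact ⟨(m : ℤ) - 2 + (2 * m - 1) * c, by linarith⟩
  · obtain ⟨c, hc⟩ := h2
    exact ⟨(m : ℤ) + (2 * m - 1) * c, by linarith⟩
  · simp at h

noncomputable def auxC (m : ℕ) (M : ℤ) (N : ℕ) (k : ℤ) : ℂ :=
  (chiP m k : ℂ) *
    Complex.exp (2 * Real.pi * Complex.I * M * (k : ℂ) ^ 2 / (8 * (2 * m - 1) * N))

lemma aux_p_ne (m : ℕ) : (2 * (m : ℂ) - 1) ≠ 0 := by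
  have : (2 * (m : ℤ) - 1) ≠ 0 := by omega
  exact_mod_cast this

lemma auxC_neg (m : ℕ) (hm : 2 ≤ m) (M : ℤ) (N : ℕ) (k : ℤ) :
    auxC m M N (-k) = - auxC m M N k := by
  unfold auxC
  rw [chiP_neg m hm]
  push_cast
  rw [neg_sq]
  ring

lemma auxC_add (m : ℕ) (M : ℤ) (N : ℕ) (hN : 0 < N) (hNodd : Odd N) (k : ℤ) :
    auxC m M N (k + (4 * m - 2) * N) = auxC m M N k := by
  unfold auxC
  rw [chiP_add]
  by_cases h : chiP m k = 0
  · simp [h]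
  obtain ⟨j, rfl⟩ := chiP_odd m k h
  obtain ⟨n, hn⟩ := hNodd
  congr 1
  rw [Complex.exp_eq_exp_iff_exists_int]
  refine ⟨M * (j + 2 * m * n + m - n), ?_⟩
  have h1 := aux_p_ne m
  have h2 : (N : ℂ) ≠ 0 := by exact_mod_cast hN.ne'
  have h3 : (N : ℂ) = 2 * n + 1 := by rw [hn]; push_cast; ring
  field_simp
  push_cast
  rw [h3]
  ring

theorem stmt8 (m : ℕ) (hm : 2 ≤ m) (M : ℤ) (N : ℕ) (hN : 0 < N) (hNodd : Odd N)
    (hMN : IsCoprime M (N : ℤ)) :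
    Filter.Tendsto
      (fun t : ℝ => ((2 * (m : ℂ) - 1) / 2) *
        ∑' k : ℕ, (chiP m k : ℂ) *
          Complex.exp ((2 * Real.pi * Complex.I * M / N - t) * ((k : ℂ) ^ 2 / (8 * (2 * m - 1)))))
      (nhdsWithin 0 (Set.Ioi 0))
      (nhds (-(1 / (8 * (2 * (m : ℂ) - 1) * (N : ℂ) ^ 2)) *
        ∑ k ∈ Finset.range ((4 * m - 2) * N + 1),
          (k : ℂ) ^ 2 * (chiP m k : ℂ) *
            Complex.exp (2 * Real.pi * Complex.I * M * (k : ℂ) ^ 2 / (8 * (2 * m - 1) * N)))) := by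
  set P : ℕ := (4 * m - 2) * N with hPdef
  have hP : 0 < P := Nat.mul_pos (by omega) hN
  have hPz : (P : ℤ) = (4 * m - 2) * N := by
    rw [hPdef]; push_cast [Nat.cast_sub (show 2 ≤ 4 * m by omega)]; ring
  have hPc : (P : ℂ) = 2 * (2 * m - 1) * N := by
    have : (P : ℂ) = ((P : ℤ) : ℂ) := by push_cast; rfl
    rw [this, hPz]; push_cast; ring
  have hPc0 : (P : ℂ) ≠ 0 := by exact_mod_cast hP.ne'
  have h1 := aux_p_ne m
  have h2 : (N : ℂ) ≠ 0 := by exact_mod_cast hN.ne'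
  set C : ℕ → ℂ := fun k => auxC m M N k with hC
  have hper : ∀ k, C (k + P) = C k := fun k => by
    simp only [hC]; push_cast; rw [hPz]; exact auxC_add m M N hN hNodd k
  have hC0 : C 0 = 0 := by simp [hC, auxC, chiP_zero m hm]
  have hCP : C P = 0 := by rw [← hC0, ← hper 0, zero_add]
  have hrefl : ∀ k ∈ Finset.range (P + 1), C (P - k) = - C k := fun k hk => by
    have hk : k ≤ P := by simpa [Nat.lt_succ_iff] using hk
    simp only [hC]
    rw [← auxC_neg m hm, Nat.cast_sub hk, hPz, ← auxC_add m M N hN hNodd (-k)]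
    congr 1; ring
  have hS0 : ∑ k ∈ Finset.range (P + 1), C k = 0 := by
    have h := Finset.sum_range_reflect C (P + 1)
    simp only [Nat.add_sub_cancel] at h
    rw [Finset.sum_congr rfl hrefl, Finset.sum_neg_distrib] at h
    exact self_eq_neg.mp h.symm
  have hS2 : ∑ k ∈ Finset.range (P + 1), (k : ℂ) ^ 2 * C k
      = P * ∑ k ∈ Finset.range (P + 1), (k : ℂ) * C k := by
    have h := Finset.sum_range_reflect (fun k : ℕ => (k : ℂ) ^ 2 * C k) (P + 1)
    simp only [Nat.add_sub_cancel] at h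
    have h' : ∑ k ∈ Finset.range (P + 1), ((P - k : ℕ) : ℂ) ^ 2 * C (P - k)
        = ∑ k ∈ Finset.range (P + 1), (-(P : ℂ) ^ 2 * C k + 2 * P * (k * C k) - k ^ 2 * C k) := by
      refine Finset.sum_congr rfl fun k hk => ?_
      rw [hrefl k hk]
      have hk : k ≤ P := by simpa [Nat.lt_succ_iff] using hk
      rw [Nat.cast_sub hk]
      ring
    rw [h', Finset.sum_sub_distrib, Finset.sum_add_distrib, ← Finset.mul_sum, ← Finset.mul_sum,
      hS0] at h
    linear_combination (-1 / 2 : ℂ) * h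
  have h0 : ∑ k ∈ Finset.range P, C k = 0 := by
    rw [Finset.sum_range_succ, hCP, add_zero] at hS0; exact hS0
  have main := aux_main C P hP hper h0
  have hpr : (0 : ℝ) < 8 * (2 * m - 1) := by
    have : (2 : ℝ) ≤ m := by exact_mod_cast hm
    linarith
  have hscale : Filter.Tendsto (fun t : ℝ => t / (8 * (2 * m - 1))) (nhdsWithin 0 (Set.Ioi 0))
      (nhdsWithin 0 (Set.Ioi 0)) := by
    refine tendsto_nhdsWithin_iff.mpr ⟨?_, ?_⟩
    · have hc : Continuous (fun t : ℝ => t / (8 * (2 * (m : ℝ) - 1))) := by fun_prop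
      have := hc.tendsto 0
      rw [zero_div] at this
      exact this.mono_left nhdsWithin_le_nhds
    · filter_upwards [self_mem_nhdsWithin] with t ht
      exact div_pos ht hpr
  have fin := (main.comp hscale).const_mul ((2 * (m : ℂ) - 1) / 2)
  have hlim : -(1 / (8 * (2 * (m : ℂ) - 1) * (N : ℂ) ^ 2)) *
        ∑ k ∈ Finset.range (P + 1), (k : ℂ) ^ 2 * (chiP m k : ℂ) *
            Complex.exp (2 * Real.pi * Complex.I * M * (k : ℂ) ^ 2 / (8 * (2 * m - 1) * N))
      = (2 * (m : ℂ) - 1) / 2 * (-(1 / (P : ℂ)) * ∑ k ∈ Finset.range P, (k : ℂ) * C k) := by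
    have e1 : ∑ k ∈ Finset.range (P + 1), (k : ℂ) ^ 2 * (chiP m k : ℂ) *
            Complex.exp (2 * Real.pi * Complex.I * M * (k : ℂ) ^ 2 / (8 * (2 * m - 1) * N))
        = ∑ k ∈ Finset.range (P + 1), (k : ℂ) ^ 2 * C k := by
      refine Finset.sum_congr rfl fun k _ => ?_
      simp only [hC, auxC]
      push_cast
      ring
    rw [e1, hS2, Finset.sum_range_succ, hCP, mul_zero, add_zero, hPc]
    field_simp
    ring
  rw [hlim]
  refine fin.congr fun t => ?_
  simp only [Function.comp]
  congr 1
  refine tsum_congr fun k => ?_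
  simp only [hC, auxC]
  rw [mul_assoc, Complex.ofReal_exp, ← Complex.exp_add]
  congr 2
  push_cast
  field_simp
  ring
end
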